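/- Let (X,d) be a metric space, R a binary relation on X, Y an R-complete subspace of X, and f, g two self-mappings on X. Suppose: (a) f(X) ⊆ g(X) ∩ Y; (b) R is (f,g)-closed; (c) there exists x₀ ∈ X with (g x₀, f x₀) ∈ R; (d) there exists α ∈ [0,1) such that d(f x, f y) ≤ α·d(g x, g y) for all x,y ∈ X with (g x, g y) ∈ R; (e′1) Y ⊆ g(X); (e′2) f is (g,R)-continuous. Then f and g have a coincidence point, i.e. there exists u ∈ X with g u = f u. -/

import Mathlib

open Filter

/-!
Since `f` takes values in the range of `g`, one can choose `s` with `g (s (n + 1)) = f (s n)`.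
Closedness propagates the relation from `g (s 0)`, `f (s 0)` along `g ∘ s`, so the contraction
inequality applies at every step and `f ∘ s` is Cauchy. Its limit has the form `g u`; since `g ∘ s`
is `f ∘ s` up to a shift, it has the same limit, and continuity of `f` relative to `g` gives
`f u` as a second limit of `f ∘ s`.
-/

open Set Topology

section Relation

variable {A X : Type*}

/-- An `R`-preserving sequence: consecutive terms are related by `R`. -/
def RelPreserving (R : X → X → Prop) (s : ℕ → X) : Prop :=
  ∀ n, R (s n) (s (n + 1))

/-- The relation `R` is `(f, g)`-closed. The common domain of `f` and `g` need not be the type on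
which `R` lives. -/
def RelClosed (R : X → X → Prop) (f g : A → X) : Prop :=
  ∀ ⦃a b⦄, R (g a) (g b) → R (f a) (f b)

/-- `R`-completeness of a subset `Y`: every `R`-preserving Cauchy sequence in `Y` converges to a
point of `Y`. -/
def IsRelComplete [UniformSpace X] (R : X → X → Prop) (Y : Set X) : Prop :=
  ∀ s : ℕ → X, (∀ n, s n ∈ Y) → RelPreserving R s → CauchySeq s → ∃ y ∈ Y, Tendsto s atTop (𝓝 y)

/-- `(g, R)`-continuity of `f`: sequential continuity of `f` relative to `g`, tested only on
sequences whose image under `g` is `R`-preserving. No topology on the domain is involved. -/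
def RelContinuous [TopologicalSpace X] (R : X → X → Prop) (f g : A → X) : Prop :=
  ∀ (s : ℕ → A) (a : A), RelPreserving R (g ∘ s) →
    Tendsto (g ∘ s) atTop (𝓝 (g a)) → Tendsto (f ∘ s) atTop (𝓝 (f a))

/-- A Jungck sequence (joint Picard iteration) of the pair `f`, `g`, which for `g = id` is an
orbit of `f`. -/
def IsJungckSeq (f g : A → X) (s : ℕ → A) : Prop :=
  ∀ n, g (s (n + 1)) = f (s n)

variable {R : X → X → Prop} {f g : A → X} {s : ℕ → A}

theorem RelClosed.relPreserving_comp (hfg : RelClosed R f g) (hs : RelPreserving R (g ∘ s)) :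
    RelPreserving R (f ∘ s) :=
  fun n => hfg (hs n)

theorem exists_isJungckSeq (hfg : range f ⊆ range g) (a₀ : A) :
    ∃ s, s 0 = a₀ ∧ IsJungckSeq f g s := by
  choose next g_next using range_subset_iff.1 hfg
  refine ⟨fun n => next^[n] a₀, rfl, fun n => ?_⟩
  simp only [Function.iterate_succ_apply', g_next]

namespace IsJungckSeq

theorem relPreserving (hs : IsJungckSeq f g s) (hfg : RelClosed R f g)
    (h₀ : R (g (s 0)) (f (s 0))) : RelPreserving R (g ∘ s) := by
  intro n
  simp only [Function.comp_apply, hs n]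
  induction n with
  | zero => exact h₀
  | succ n ih =>
    rw [← hs n] at ih
    simpa only [hs n] using hfg ih

theorem tendsto_comp_iff (hs : IsJungckSeq f g s) {l : Filter X} :
    Tendsto (f ∘ s) atTop l ↔ Tendsto (g ∘ s) atTop l := by
  rw [← tendsto_add_atTop_iff_nat (f := g ∘ s) 1]
  exact tendsto_congr fun n => (hs n).symm

theorem inseparable_of_tendsto [TopologicalSpace X] [R1Space X] (hs : IsJungckSeq f g s)
    (hgs : RelPreserving R (g ∘ s)) (hf : RelContinuous R f g) {u : A}
    (hu : Tendsto (f ∘ s) atTop (𝓝 (g u))) : Inseparable (g u) (f u) :=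
  tendsto_nhds_unique_inseparable hu (hf s u hgs (hs.tendsto_comp_iff.1 hu))

end IsJungckSeq

end Relation

section Contraction

variable {A X : Type*} [PseudoMetricSpace X] {R : X → X → Prop} {f g : A → X} {α : ℝ}

theorem cauchySeq_of_dist_succ_le_mul {x : ℕ → X} (hα₀ : 0 ≤ α) (hα₁ : α < 1)
    (hx : ∀ n, dist (x (n + 1)) (x (n + 2)) ≤ α * dist (x n) (x (n + 1))) : CauchySeq x := by
  refine cauchySeq_of_le_geometric α (dist (x 0) (x 1)) hα₁ fun n => ?_
  rw [mul_comm]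
  exact le_geom (u := fun n => dist (x n) (x (n + 1))) hα₀ n fun k _ => hx k

theorem IsJungckSeq.cauchySeq {s : ℕ → A} (hs : IsJungckSeq f g s)
    (hgs : RelPreserving R (g ∘ s)) (hα₀ : 0 ≤ α) (hα₁ : α < 1)
    (hdist : ∀ a b, R (g a) (g b) → dist (f a) (f b) ≤ α * dist (g a) (g b)) :
    CauchySeq (f ∘ s) := by
  refine cauchySeq_of_dist_succ_le_mul hα₀ hα₁ fun n => ?_
  simpa only [hs n, hs (n + 1), Function.comp_apply] using hdist _ _ (hgs (n + 1))

theorem coincidence_e'_gRcontinuous_general {Y : Set X} (hY : IsRelComplete R Y)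
    (hfY : range f ⊆ Y) (hYg : Y ⊆ range g) (hfg : RelClosed R f g)
    (h₀ : ∃ a₀, R (g a₀) (f a₀)) (hα₀ : 0 ≤ α) (hα₁ : α < 1)
    (hdist : ∀ a b, R (g a) (g b) → dist (f a) (f b) ≤ α * dist (g a) (g b))
    (hf : RelContinuous R f g) : ∃ u, Inseparable (g u) (f u) := by
  obtain ⟨a₀, ha₀⟩ := h₀
  obtain ⟨s, rfl, hs⟩ := exists_isJungckSeq (hfY.trans hYg) a₀
  have hgs : RelPreserving R (g ∘ s) := hs.relPreserving hfg ha₀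
  obtain ⟨y, hyY, hy⟩ := hY (f ∘ s) (fun n => hfY (mem_range_self (s n)))
    (hfg.relPreserving_comp hgs) (hs.cauchySeq hgs hα₀ hα₁ hdist)
  obtain ⟨u, rfl⟩ := hYg hyY
  exact ⟨u, hs.inseparable_of_tendsto hgs hf hy⟩

end Contraction

/-- Theorem 2, case (e′) with `f` `(g,R)`-continuous: existence of a
coincidence point of `f` and `g`. -/
theorem coincidence_e'_gRcontinuous {X : Type*} [MetricSpace X]
    (R : X → X → Prop) (Y : Set X) (f g : X → X)
    (hY : ∀ s : ℕ → X, (∀ n, s n ∈ Y) → (∀ n, R (s n) (s (n + 1))) → CauchySeq s →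
      ∃ y ∈ Y, Tendsto s atTop (nhds y))
    (ha : ∀ x : X, f x ∈ Set.range g ∩ Y)
    (hb : ∀ x y : X, R (g x) (g y) → R (f x) (f y))
    (hc : ∃ x₀ : X, R (g x₀) (f x₀))
    (hd : ∃ α : ℝ, 0 ≤ α ∧ α < 1 ∧
      ∀ x y : X, R (g x) (g y) → dist (f x) (f y) ≤ α * dist (g x) (g y))
    (he'1 : Y ⊆ Set.range g)
    (he'2 : ∀ (s : ℕ → X) (x : X), (∀ n, R (g (s n)) (g (s (n + 1)))) →
      Tendsto (fun n => g (s n)) atTop (nhds (g x)) →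
      Tendsto (fun n => f (s n)) atTop (nhds (f x))) :
    ∃ u : X, g u = f u := by
  obtain ⟨α, hα₀, hα₁, hdist⟩ := hd
  exact (coincidence_e'_gRcontinuous_general hY (Set.range_subset_iff.2 fun x => (ha x).2) he'1
    hb hc hα₀ hα₁ hdist he'2).imp fun _ hu => hu.eq
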